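/- In U = U_q⁺(C₂), for every integer n ≥ 1, with the convention that any term containing a negative power of a generator is read as 0 (its scalar coefficient then vanishes): b₄b₁ⁿ = q^{2n} b₁ⁿb₄ + [n]₂ b₁^{n−1}b₂; b₄b₂ⁿ = [2]₁[n]₁ q^{1−n} b₂^{n−1}b₃ + b₂ⁿb₄; b₄b₃ⁿ = q^{−2n} b₃ⁿb₄; b₄ⁿb₁ = [n]₁ q^{n−1} b₂b₄^{n−1} + q^{2n} b₁b₄ⁿ + [n−1]₁[n]₁ b₃b₄^{n−2}; b₃ⁿb₁ = −q^{1−2n}⟨1⟩[n]₂[2]₁⁻¹ b₂²b₃^{n−1} + b₁b₃ⁿ; b₃ⁿb₂ = q^{−2n} b₂b₃ⁿ; and b₂ⁿb₁ = q^{−2n} b₁b₂ⁿ. -/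

import Mathlib

noncomputable section

/-- The base field `K = ℚ(q)`, rational functions over `ℚ`. -/
abbrev K : Type := RatFunc ℚ

/-- The indeterminate `q`. -/
def q : K := RatFunc.X

/-- `⟨m⟩ = q^m − q^{−m}`. -/
def qbra (m : ℕ) : K := q ^ m - q⁻¹ ^ m

/-- `[m]₁ = ⟨m⟩/⟨1⟩`. -/
def qn1 (m : ℕ) : K := qbra m / qbra 1

/-- `[m]₂ = ⟨2m⟩/⟨2⟩`. -/
def qn2 (m : ℕ) : K := qbra (2 * m) / qbra 2

/-- Generators of the free algebra on two letters. -/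
def g (i : Fin 2) : FreeAlgebra K (Fin 2) := FreeAlgebra.ι K i

/-- The `q`-Serre relations of type `C₂`. -/
inductive SerreC2 : FreeAlgebra K (Fin 2) → FreeAlgebra K (Fin 2) → Prop
  | rel1 : SerreC2
      (g 0 ^ 3 * g 1 - qn1 3 • (g 0 ^ 2 * g 1 * g 0) + qn1 3 • (g 0 * g 1 * g 0 ^ 2)
        - g 1 * g 0 ^ 3) 0
  | rel2 : SerreC2
      (g 1 ^ 2 * g 0 - qn2 2 • (g 1 * g 0 * g 1) + g 0 * g 1 ^ 2) 0

/-- `U_q⁺(C₂)`: the free algebra on `e₁, e₂` modulo the `q`-Serre relations. -/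
abbrev UC2 : Type := RingQuot SerreC2

/-- The Chevalley generator `e₁`. -/
def e1 : UC2 := RingQuot.mkAlgHom K SerreC2 (g 0)

/-- The Chevalley generator `e₂`. -/
def e2 : UC2 := RingQuot.mkAlgHom K SerreC2 (g 1)

/-- The root vector `b₁ = e₂`. -/
def b1 : UC2 := e2

/-- The root vector `b₂ = e₁e₂ − q² e₂e₁`. -/
def b2 : UC2 := e1 * e2 - (q ^ 2) • (e2 * e1)

/-- The root vector `b₃ = [2]₁⁻¹ (e₁b₂ − b₂e₁)`. -/
def b3 : UC2 := (qn1 2)⁻¹ • (e1 * b2 - b2 * e1)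

/-- The root vector `b₄ = e₁`. -/
def b4 : UC2 := e1

/-! Put `x = e₁`, `y = e₂`, `z = b₂`, `w = x z - z x = [2]₁ b₃`, `a = q²` and `b = q⁻²`. As
polynomials in the commuting operators of left and right multiplication by a generator, the Serre
relations split into linear factors. This yields `z y = b y z` and `x w = b w x`. Pushing `x`
through `z y = b y z` gives `w y = y w + (b - 1) z²`, and pushing `x` through the latter gives
`w z = b z w`.

All the power relations are then iterations of rules `u v = c v u + t`, where `t` skew-commutes with
`u` or `v`, possibly after one further correction term. The coefficients that accumulate are
geometric sums `∑ cⁱ dⁿ⁻¹⁻ⁱ`, that is, `q`-integers up to a power of `q`.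
-/

section StraighteningRules

variable {R A : Type*} [CommRing R] [Ring A] [Algebra R A] {a b : R} {x y z w : A}

theorem skew_commute_of_quadratic_serre (hab : a * b = 1)
    (h : x ^ 2 * y - (a + b) • (x * y * x) + y * x ^ 2 = 0) :
    (y * x - a • (x * y)) * x = b • (x * (y * x - a • (x * y))) := by
  simp only [pow_two, sub_mul, mul_sub, smul_sub, smul_mul_assoc, mul_smul_comm, smul_smul,
    mul_assoc, mul_comm b a, hab] at h ⊢
  linear_combination (norm := module) h

theorem skew_commute_of_cubic_serre (hab : a * b = 1)
    (h : x ^ 3 * y - (a + 1 + b) • (x ^ 2 * y * x) + (a + 1 + b) • (x * y * x ^ 2) - y * x ^ 3 = 0)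
    (hz : x * y = a • (y * x) + z) (hw : x * z = z * x + w) :
    x * w = b • (w * x) := by
  obtain rfl := eq_sub_of_add_eq' hz.symm
  obtain rfl := eq_sub_of_add_eq' hw.symm
  simp only [pow_succ, pow_zero, one_mul, sub_mul, mul_sub, smul_sub, smul_mul_assoc,
    mul_smul_comm, smul_smul, mul_assoc, mul_comm b a, hab] at h ⊢
  linear_combination (norm := module) h

theorem mul_eq_mul_add_sq_of_skew_commute (hab : a * b = 1) (hz : x * y = a • (y * x) + z)
    (hw : x * z = z * x + w) (hzy : z * y = b • (y * z)) :
    w * y = y * w + (b - 1) • z ^ 2 := by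
  have hleft : x * (z * y) = y * z * x + z ^ 2 + w * y := by
    rw [← mul_assoc, hw, add_mul, mul_assoc z, hz, mul_add, mul_smul_comm, ← mul_assoc z, hzy,
      smul_mul_assoc, smul_smul, hab, one_smul, pow_two]
  have hright : x * (b • (y * z)) = y * z * x + y * w + b • z ^ 2 := by
    rw [mul_smul_comm, ← mul_assoc, hz, add_mul, smul_mul_assoc, mul_assoc y x, hw, smul_add,
      smul_smul, mul_comm b, hab, one_smul, mul_add, pow_two, ← mul_assoc]
  rw [hzy, hright] at hleft
  linear_combination (norm := module) -hleft

theorem skew_commute_of_mul_eq_mul_add_sq (hab : a * b = 1) (hz : x * y = a • (y * x) + z)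
    (hw : x * z = z * x + w) (hxw : x * w = b • (w * x))
    (hwy : w * y = y * w + (b - 1) • z ^ 2) :
    w * z = b • (z * w) := by
  have hleft : x * (w * y) = w * y * x + b • (w * z) := by
    rw [← mul_assoc, hxw, smul_mul_assoc, mul_assoc w, hz, mul_add, mul_smul_comm, smul_add,
      smul_smul, mul_comm b, hab, one_smul, ← mul_assoc]
  have hyw : x * (y * w) = y * w * x + z * w := by
    rw [← mul_assoc, hz, add_mul, smul_mul_assoc, mul_assoc y x, hxw, mul_smul_comm, smul_smul,
      hab, one_smul, ← mul_assoc]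
  have hzz : x * z ^ 2 = z ^ 2 * x + z * w + w * z := by
    rw [pow_two, ← mul_assoc, hw, add_mul, mul_assoc z x, hw, mul_add, ← mul_assoc]
  rw [hwy, mul_add, mul_smul_comm, hyw, hzz, add_mul, smul_mul_assoc] at hleft
  linear_combination (norm := module) -hleft

end StraighteningRules

section PowerRules

open Finset

variable {R A : Type*} [CommSemiring R] [Semiring A] [Algebra R A] {a b c : R} {x y z w : A}

theorem mul_pow_of_skew_commute (h : x * y = a • (y * x)) (n : ℕ) :
    x * y ^ n = a ^ n • (y ^ n * x) := by
  have hsemi : SemiconjBy x y (a • y) := by rw [SemiconjBy, h, smul_mul_assoc]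
  rw [(hsemi.pow_right n).eq, smul_pow, smul_mul_assoc]

theorem pow_mul_of_skew_commute (h : x * y = a • (y * x)) (n : ℕ) :
    x ^ n * y = a ^ n • (y * x ^ n) := by
  have hsemi : SemiconjBy y (a • x) x := by rw [SemiconjBy, h, mul_smul_comm]
  rw [← (hsemi.pow_right n).eq, smul_pow, mul_smul_comm]

theorem sum_range_succ_mul_pow (f : ℕ → R) (c : R) (n : ℕ) :
    ∑ k ∈ range (n + 1), f k * c ^ (n - k) = f n + c * ∑ k ∈ range n, f k * c ^ (n - 1 - k) := by
  rw [sum_range_succ_comm, Nat.sub_self, pow_zero, mul_one, mul_sum]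
  congr 1
  refine sum_congr rfl fun k hk => ?_
  rw [show n - k = n - 1 - k + 1 by have := mem_range.mp hk; omega, pow_succ']
  exact mul_left_comm _ _ _

theorem pow_mul_of_skew_commute_add_add (hz : x * y = a • (y * x) + z)
    (hw : x * z = b • (z * x) + w) (hxw : x * w = c • (w * x)) (n : ℕ) :
    x ^ n * y = a ^ n • (y * x ^ n)
      + (∑ i ∈ range n, a ^ i * b ^ (n - 1 - i)) • (z * x ^ (n - 1))
      + (∑ k ∈ range n, (∑ i ∈ range k, a ^ i * b ^ (k - 1 - i)) * c ^ (n - 1 - k))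
        • (w * x ^ (n - 2)) := by
  set A : ℕ → R := fun k => ∑ i ∈ range k, a ^ i * b ^ (k - 1 - i) with hA
  set B : ℕ → R := fun m => ∑ k ∈ range m, A k * c ^ (m - 1 - k) with hB
  change x ^ n * y = a ^ n • (y * x ^ n) + A n • (z * x ^ (n - 1)) + B n • (w * x ^ (n - 2))
  have hA_succ (k : ℕ) : A (k + 1) = a ^ k + b * A k := sum_range_succ_mul_pow (a ^ ·) b k
  have hB_succ (k : ℕ) : B (k + 1) = A k + c * B k := sum_range_succ_mul_pow A c k
  -- The coefficients vanish whenever the subtraction in the exponent truncates.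
  have hzx (k : ℕ) : A k • (z * (x * x ^ (k - 1))) = A k • (z * x ^ k) := by
    rcases k with _ | k
    · simp [hA]
    · rw [Nat.add_sub_cancel, pow_succ']
  have hwx (k : ℕ) : B k • (w * (x * x ^ (k - 2))) = B k • (w * x ^ (k - 1)) := by
    rcases k with _ | _ | k
    · simp [hB]
    · simp [hA, hB]
    · rw [show k + 1 + 1 - 2 = k by omega, show k + 1 + 1 - 1 = k + 1 by omega, pow_succ']
  induction n with
  | zero => simp [hA, hB]
  | succ n ih =>
    calc x ^ (n + 1) * y
      _ = a ^ n • (x * y * x ^ n) + A n • (x * z * x ^ (n - 1))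
          + B n • (x * w * x ^ (n - 2)) := by
        rw [pow_succ', mul_assoc, ih]
        simp only [mul_add, mul_smul_comm, mul_assoc]
      _ = a ^ (n + 1) • (y * x ^ (n + 1)) + a ^ n • (z * x ^ n)
          + b • A n • (z * (x * x ^ (n - 1))) + A n • (w * x ^ (n - 1))
          + c • B n • (w * (x * x ^ (n - 2))) := by
        rw [hz, hw, hxw]
        simp only [add_mul, smul_mul_assoc, mul_assoc, smul_add, ← pow_succ']
        module
      _ = _ := by
        rw [hzx, hwx, hA_succ, hB_succ, Nat.add_sub_cancel, show n + 1 - 2 = n - 1 by omega]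
        module

theorem pow_mul_of_skew_commute_add (hz : x * y = a • (y * x) + z) (hxz : x * z = b • (z * x))
    (n : ℕ) :
    x ^ n * y = a ^ n • (y * x ^ n)
      + (∑ i ∈ range n, a ^ i * b ^ (n - 1 - i)) • (z * x ^ (n - 1)) := by
  simpa using pow_mul_of_skew_commute_add_add (w := 0) (c := 0) hz (by simpa using hxz) (by simp) n

theorem mul_pow_of_skew_commute_add (hz : x * y = a • (y * x) + z) (hzy : z * y = b • (y * z))
    (n : ℕ) :
    x * y ^ n = a ^ n • (y ^ n * x)
      + (∑ i ∈ range n, a ^ i * b ^ (n - 1 - i)) • (y ^ (n - 1) * z) := by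
  open MulOpposite in
  have h := pow_mul_of_skew_commute_add (x := op y) (y := op x) (z := op z) (a := a) (b := b)
    (by simp only [← op_mul, ← op_smul, ← op_add, hz]) (by simp only [← op_mul, ← op_smul, hzy]) n
  exact op_injective (by simpa only [op_mul, op_pow, op_add, op_smul] using h)

end PowerRules

section QIntegers

open Finset

theorem q_ne_zero : q ≠ 0 := RatFunc.X_ne_zero

theorem q_pow_ne_one {k : ℕ} (hk : k ≠ 0) : q ^ k ≠ 1 := by
  intro h
  have hX : (Polynomial.X ^ k : Polynomial ℚ) = 1 :=
    RatFunc.algebraMap_injective ℚ (by simpa [q] using h)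
  simpa [hk] using congrArg Polynomial.natDegree hX

theorem q_sq_mul_inv : q ^ 2 * (q ^ 2)⁻¹ = 1 := mul_inv_cancel₀ (pow_ne_zero 2 q_ne_zero)

theorem inv_q_sq_pow (n : ℕ) : (q ^ 2)⁻¹ ^ n = q ^ (-(2 * n : ℤ)) := by
  rw [inv_pow, ← pow_mul, zpow_neg]
  norm_cast

theorem qbra_eq_div (m : ℕ) : qbra m = ((q ^ 2) ^ m - 1) / q ^ m := by
  have hq := q_ne_zero
  rw [qbra, inv_pow]
  field_simp
  ring

theorem qbra_ne_zero {m : ℕ} (hm : m ≠ 0) : qbra m ≠ 0 := by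
  rw [qbra_eq_div, ← pow_mul]
  exact div_ne_zero (sub_ne_zero.mpr (q_pow_ne_one (by omega))) (pow_ne_zero m q_ne_zero)

theorem qn1_two_ne_zero : qn1 2 ≠ 0 :=
  div_ne_zero (qbra_ne_zero two_ne_zero) (qbra_ne_zero one_ne_zero)

theorem qn1_three : qn1 3 = q ^ 2 + 1 + (q ^ 2)⁻¹ := by
  have hq := q_ne_zero
  rw [qn1, div_eq_iff (qbra_ne_zero one_ne_zero), qbra_eq_div, qbra_eq_div]
  field_simp
  ring

theorem qn2_two : qn2 2 = q ^ 2 + (q ^ 2)⁻¹ := by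
  have hq := q_ne_zero
  rw [qn2, div_eq_iff (qbra_ne_zero two_ne_zero), qbra_eq_div, qbra_eq_div]
  field_simp
  ring

theorem qn1_add_two (n : ℕ) : qn1 (n + 2) = qn1 2 * q ^ n + (q ^ 2)⁻¹ * qn1 n := by
  have hq := q_ne_zero
  have h1 := qbra_ne_zero one_ne_zero
  simp only [qn1]
  field_simp
  simp only [qbra_eq_div]
  field_simp
  ring

theorem q_sq_geom_sum_inv (n : ℕ) :
    ∑ i ∈ range n, (q ^ 2) ^ i * (q ^ 2)⁻¹ ^ (n - 1 - i) = qn2 n := by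
  have hne : q ^ 2 ≠ (q ^ 2)⁻¹ := sub_ne_zero.mp (by simpa [qbra] using qbra_ne_zero two_ne_zero)
  rw [geom₂_sum hne, qn2, qbra, qbra, pow_mul, pow_mul, inv_pow q 2]

theorem q_sq_geom_sum_one (n : ℕ) :
    ∑ i ∈ range n, (q ^ 2) ^ i * 1 ^ (n - 1 - i) = qn1 n * q ^ ((n : ℤ) - 1) := by
  have hq := q_ne_zero
  have hne : q ^ 2 ≠ 1 := q_pow_ne_one two_ne_zero
  have h2 := sub_ne_zero.mpr hne
  rw [geom₂_sum hne, one_pow, qn1, qbra_eq_div, qbra_eq_div, zpow_sub₀ hq, zpow_natCast, zpow_one]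
  field_simp

theorem one_geom_sum_inv_q_sq (n : ℕ) :
    ∑ i ∈ range n, 1 ^ i * (q ^ 2)⁻¹ ^ (n - 1 - i) = qn1 n * q ^ ((1 : ℤ) - n) := by
  have hq := q_ne_zero
  have hne : 1 ≠ (q ^ 2)⁻¹ := by simpa [eq_comm] using q_pow_ne_one two_ne_zero
  have h2 : q ^ 2 - 1 ≠ 0 := sub_ne_zero.mpr (q_pow_ne_one two_ne_zero)
  rw [geom₂_sum hne, one_pow, inv_pow, qn1, qbra_eq_div, qbra_eq_div, zpow_sub₀ hq, zpow_natCast,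
    zpow_one]
  field_simp
  ring

theorem one_geom_sum_inv_q_four (n : ℕ) :
    ∑ i ∈ range n, 1 ^ i * ((q ^ 2)⁻¹ ^ 2) ^ (n - 1 - i) = qn2 n * q ^ (2 - 2 * n : ℤ) := by
  have hq := q_ne_zero
  have h4 : (q ^ 2) ^ 2 ≠ 1 := by rw [← pow_mul]; exact q_pow_ne_one (by norm_num)
  have hne : 1 ≠ (q ^ 2)⁻¹ ^ 2 := by simpa [eq_comm] using h4
  rw [geom₂_sum hne, one_pow, inv_pow, inv_pow, qn2, qbra_eq_div, qbra_eq_div, zpow_sub₀ hq]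
  norm_cast
  field_simp
  ring

theorem iterated_geom_sum_mul_qn1_two (n : ℕ) :
    (∑ k ∈ range n, (∑ i ∈ range k, (q ^ 2) ^ i * 1 ^ (k - 1 - i)) * (q ^ 2)⁻¹ ^ (n - 1 - k))
      * qn1 2 = qn1 (n - 1) * qn1 n := by
  simp only [q_sq_geom_sum_one]
  induction n with
  | zero => simp [qn1, qbra]
  | succ n ih =>
    rw [Nat.add_sub_cancel, sum_range_succ_mul_pow, add_mul, mul_assoc (q ^ 2)⁻¹, ih]
    rcases n with _ | n
    · simp [qn1, qbra]
    · rw [Nat.add_sub_cancel, qn1_add_two n]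
      push_cast
      rw [add_sub_cancel_right, zpow_natCast]
      ring

end QIntegers

section RootVectors

theorem e1_e2_serre :
    e1 ^ 3 * e2 - qn1 3 • (e1 ^ 2 * e2 * e1) + qn1 3 • (e1 * e2 * e1 ^ 2) - e2 * e1 ^ 3 = 0 := by
  have h := RingQuot.mkAlgHom_rel K SerreC2.rel1
  simp only [map_sub, map_add, map_mul, map_pow, map_smul, map_zero] at h
  exact h

theorem e2_e1_serre : e2 ^ 2 * e1 - qn2 2 • (e2 * e1 * e2) + e1 * e2 ^ 2 = 0 := by
  have h := RingQuot.mkAlgHom_rel K SerreC2.rel2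
  simp only [map_sub, map_add, map_mul, map_pow, map_smul, map_zero] at h
  exact h

theorem b4_mul_b1 : b4 * b1 = q ^ 2 • (b1 * b4) + b2 := by
  rw [b4, b1, b2, add_sub_cancel]

theorem b4_mul_b2 : b4 * b2 = b2 * b4 + qn1 2 • b3 := by
  rw [b3, smul_inv_smul₀ qn1_two_ne_zero, b4, add_sub_cancel]

theorem b2_mul_b1 : b2 * b1 = (q ^ 2)⁻¹ • (b1 * b2) :=
  skew_commute_of_quadratic_serre q_sq_mul_inv (qn2_two ▸ e2_e1_serre)

theorem b4_mul_qn1_two_smul_b3 : b4 * (qn1 2 • b3) = (q ^ 2)⁻¹ • (qn1 2 • b3 * b4) :=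
  skew_commute_of_cubic_serre q_sq_mul_inv (qn1_three ▸ e1_e2_serre) b4_mul_b1 b4_mul_b2

theorem qn1_two_smul_b3_mul_b1 :
    qn1 2 • b3 * b1 = b1 * (qn1 2 • b3) + ((q ^ 2)⁻¹ - 1) • b2 ^ 2 :=
  mul_eq_mul_add_sq_of_skew_commute q_sq_mul_inv b4_mul_b1 b4_mul_b2 b2_mul_b1

theorem qn1_two_smul_b3_mul_b2 : qn1 2 • b3 * b2 = (q ^ 2)⁻¹ • (b2 * (qn1 2 • b3)) :=
  skew_commute_of_mul_eq_mul_add_sq q_sq_mul_inv b4_mul_b1 b4_mul_b2 b4_mul_qn1_two_smul_b3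
    qn1_two_smul_b3_mul_b1

theorem b4_mul_b3 : b4 * b3 = (q ^ 2)⁻¹ • (b3 * b4) := by
  refine smul_right_injective _ qn1_two_ne_zero ?_
  simpa only [mul_smul_comm, smul_mul_assoc, smul_comm (qn1 2)] using b4_mul_qn1_two_smul_b3

theorem b3_mul_b2 : b3 * b2 = (q ^ 2)⁻¹ • (b2 * b3) := by
  refine smul_right_injective _ qn1_two_ne_zero ?_
  simpa only [mul_smul_comm, smul_mul_assoc, smul_comm (qn1 2)] using qn1_two_smul_b3_mul_b2

theorem b3_mul_b1 : b3 * b1 = b1 * b3 + (-(q⁻¹ * qbra 1 * (qn1 2)⁻¹)) • b2 ^ 2 := by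
  have hscalar : qn1 2 * -(q⁻¹ * qbra 1 * (qn1 2)⁻¹) = (q ^ 2)⁻¹ - 1 := by
    have hq := q_ne_zero
    have h2 := qn1_two_ne_zero
    rw [qbra_eq_div]
    field_simp
    ring
  refine smul_right_injective _ qn1_two_ne_zero ?_
  simpa only [smul_add, smul_smul, hscalar, mul_smul_comm, smul_mul_assoc]
    using qn1_two_smul_b3_mul_b1

theorem b4_mul_b1_pow (n : ℕ) :
    b4 * b1 ^ n = q ^ (2 * n) • (b1 ^ n * b4) + qn2 n • (b1 ^ (n - 1) * b2) := by
  rw [mul_pow_of_skew_commute_add b4_mul_b1 b2_mul_b1, q_sq_geom_sum_inv, pow_mul]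

theorem b4_mul_b2_pow (n : ℕ) :
    b4 * b2 ^ n
      = (qn1 2 * qn1 n * q ^ ((1 : ℤ) - n)) • (b2 ^ (n - 1) * b3) + b2 ^ n * b4 := by
  have hadd : b4 * b2 = (1 : K) • (b2 * b4) + qn1 2 • b3 := by rw [one_smul, b4_mul_b2]
  rw [mul_pow_of_skew_commute_add hadd qn1_two_smul_b3_mul_b2, one_geom_sum_inv_q_sq, one_pow,
    one_smul, mul_smul_comm, smul_smul, add_comm]
  congr 2
  ring

theorem b4_mul_b3_pow (n : ℕ) : b4 * b3 ^ n = q ^ (-(2 * n : ℤ)) • (b3 ^ n * b4) := by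
  rw [mul_pow_of_skew_commute b4_mul_b3, inv_q_sq_pow]

theorem b4_pow_mul_b1 (n : ℕ) :
    b4 ^ n * b1
      = (qn1 n * q ^ ((n : ℤ) - 1)) • (b2 * b4 ^ (n - 1)) + q ^ (2 * n) • (b1 * b4 ^ n)
        + (qn1 (n - 1) * qn1 n) • (b3 * b4 ^ (n - 2)) := by
  have hadd : b4 * b2 = (1 : K) • (b2 * b4) + qn1 2 • b3 := by rw [one_smul, b4_mul_b2]
  rw [pow_mul_of_skew_commute_add_add b4_mul_b1 hadd b4_mul_qn1_two_smul_b3, q_sq_geom_sum_one,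
    smul_mul_assoc, smul_smul, iterated_geom_sum_mul_qn1_two, pow_mul, add_comm (_ • (b1 * _))]

theorem b3_pow_mul_b1 (n : ℕ) :
    b3 ^ n * b1
      = (-(q ^ ((1 : ℤ) - 2 * n) * qbra 1 * qn2 n * (qn1 2)⁻¹)) • (b2 ^ 2 * b3 ^ (n - 1))
        + b1 * b3 ^ n := by
  set κ : K := -(q⁻¹ * qbra 1 * (qn1 2)⁻¹) with hκ
  have hadd : b3 * b1 = (1 : K) • (b1 * b3) + κ • b2 ^ 2 := by rw [one_smul, b3_mul_b1]
  have hskew : b3 * (κ • b2 ^ 2) = (q ^ 2)⁻¹ ^ 2 • (κ • b2 ^ 2 * b3) := by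
    rw [mul_smul_comm, mul_pow_of_skew_commute b3_mul_b2, smul_mul_assoc, smul_comm]
  have hexp : q ^ (2 - 2 * n : ℤ) * q⁻¹ = q ^ ((1 : ℤ) - 2 * n) := by
    rw [← zpow_sub_one₀ q_ne_zero]
    congr 1
    ring
  rw [pow_mul_of_skew_commute_add hadd hskew, one_geom_sum_inv_q_four, one_pow, one_smul,
    smul_mul_assoc, smul_smul, add_comm, hκ, ← hexp]
  congr 2
  ring

theorem b3_pow_mul_b2 (n : ℕ) : b3 ^ n * b2 = q ^ (-(2 * n : ℤ)) • (b2 * b3 ^ n) := by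
  rw [pow_mul_of_skew_commute b3_mul_b2, inv_q_sq_pow]

theorem b2_pow_mul_b1 (n : ℕ) : b2 ^ n * b1 = q ^ (-(2 * n : ℤ)) • (b1 * b2 ^ n) := by
  rw [pow_mul_of_skew_commute b2_mul_b1, inv_q_sq_pow]

end RootVectors

/-- power commutation relations among the root vectors of `U_q⁺(C₂)`.
(Terms with a negative power of a generator appear with vanishing coefficient, so
truncated subtraction on `ℕ` realizes the stated convention.) -/
theorem statement12 (n : ℕ) (hn : 1 ≤ n) :
    b4 * b1 ^ n = (q ^ (2 * n)) • (b1 ^ n * b4) + qn2 n • (b1 ^ (n - 1) * b2) ∧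
    b4 * b2 ^ n
      = (qn1 2 * qn1 n * q ^ ((1 : ℤ) - n)) • (b2 ^ (n - 1) * b3) + b2 ^ n * b4 ∧
    b4 * b3 ^ n = (q ^ (-(2 * n : ℤ))) • (b3 ^ n * b4) ∧
    b4 ^ n * b1
      = (qn1 n * q ^ ((n : ℤ) - 1)) • (b2 * b4 ^ (n - 1)) + (q ^ (2 * n)) • (b1 * b4 ^ n)
        + (qn1 (n - 1) * qn1 n) • (b3 * b4 ^ (n - 2)) ∧
    b3 ^ n * b1
      = (-(q ^ ((1 : ℤ) - 2 * n) * qbra 1 * qn2 n * (qn1 2)⁻¹)) • (b2 ^ 2 * b3 ^ (n - 1))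
        + b1 * b3 ^ n ∧
    b3 ^ n * b2 = (q ^ (-(2 * n : ℤ))) • (b2 * b3 ^ n) ∧
    b2 ^ n * b1 = (q ^ (-(2 * n : ℤ))) • (b1 * b2 ^ n) :=
  ⟨b4_mul_b1_pow n, b4_mul_b2_pow n, b4_mul_b3_pow n, b4_pow_mul_b1 n, b3_pow_mul_b1 n,
    b3_pow_mul_b2 n, b2_pow_mul_b1 n⟩
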